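/- Let X be a real normed linear space and let 𝒜 ⊆ S_X be a compact subset. Then every y ∈ 𝒜 is C-approximately right-symmetric on 𝒜 (i.e., for each y ∈ 𝒜 there exists ε_y ∈ [0,1) such that for all z ∈ 𝒜, z ⊥_B y implies y ⊥_B^{ε_y} z) if and only if every x ∈ 𝒜 has the local property (P) on 𝒜 (i.e., there is no y ∈ 𝒜 with x ⊥_B y such that every f ∈ J(y) satisfies f ∈ J(x) or −f ∈ J(x)). -/

import Mathlib

/-!
The heart of the matter is a dual description of approximate orthogonality: for `x ≠ 0` and
`0 ≤ ε`, one has `x ⊥_B^ε y` iff some `f ∈ J(x)` satisfies `|f y| ≤ ε‖y‖`. For the forward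
implication, convexity of `t ↦ ‖x + t y‖` upgrades `x ⊥_B^ε y` to the linear inequality
`‖x‖ ≤ ‖x + t y‖ + ε‖t y‖`. This says that `(x, 0) ⊥_B (y, ε‖y‖)` in the `ℓ¹`-sum `X ⊕₁ ℝ`, so
James' theorem gives `F ∈ J((x, 0))` vanishing at `(y, ε‖y‖)`, and `f = F(·, 0)` is as required.

As `f ∈ J(x)` or `-f ∈ J(x)` just means `|f x| = ‖x‖` when `‖f‖ = 1`, property (P) asks that for
`z ⊥_B y` some `f ∈ J(y)` have `|f z| < ‖z‖`, whereas approximate right-symmetry asks for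
`|f z| ≤ ε‖z‖` with a single `ε < 1`. The points `z ∈ 𝒜` with `z ⊥_B y` form a compact set, so the
two requirements agree.
-/

open Set Metric

section Defs

variable {E : Type*} [NormedAddCommGroup E] [NormedSpace ℝ E]

/-- Birkhoff-James orthogonality: `x ⊥_B y` iff `‖x + t • y‖ ≥ ‖x‖` for all real `t`. -/
def BJOrth (x y : E) : Prop := ∀ t : ℝ, ‖x‖ ≤ ‖x + t • y‖

/-- Dragomir-type approximate orthogonality: `x ⊥_D^ε y` iff
`‖x + t • y‖ ≥ √(1 - ε²) ‖x‖` for all real `t`. -/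
def DOrth (ε : ℝ) (x y : E) : Prop :=
  ∀ t : ℝ, Real.sqrt (1 - ε ^ 2) * ‖x‖ ≤ ‖x + t • y‖

/-- Chmieliński-type approximate orthogonality: `x ⊥_B^ε y` iff
`‖x + t • y‖² ≥ ‖x‖² - 2 ε ‖x‖ ‖t • y‖` for all real `t`. -/
def BOrth (ε : ℝ) (x y : E) : Prop :=
  ∀ t : ℝ, ‖x‖ ^ 2 - 2 * ε * ‖x‖ * ‖t • y‖ ≤ ‖x + t • y‖ ^ 2

/-- The set of supporting functionals at `x`. -/
def SuppJ (x : E) : Set (E →L[ℝ] ℝ) := {f | ‖f‖ = 1 ∧ f x = ‖x‖}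

/-- The local property (P) at `x`: there is no unit vector `y` with `x ⊥_B y` such that
every supporting functional of `y` (or its negative) supports `x`. -/
def LocalP (x : E) : Prop :=
  ¬ ∃ y : E, ‖y‖ = 1 ∧ BJOrth x y ∧ ∀ f ∈ SuppJ y, f ∈ SuppJ x ∨ -f ∈ SuppJ x

end Defs

open Filter Topology WithLp

section SupportingFunctionals

variable {E : Type*} [NormedAddCommGroup E] [NormedSpace ℝ E] {x y : E} {f : E →L[ℝ] ℝ}

lemma mem_suppJ_of_norm_le_one (hx : x ≠ 0) (hf : ‖f‖ ≤ 1) (hfx : f x = ‖x‖) : f ∈ SuppJ x := by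
  refine ⟨le_antisymm hf ?_, hfx⟩
  simpa [hfx, norm_pos_iff.2 hx] using f.le_opNorm x

lemma mem_suppJ_or_neg_mem_suppJ_iff (hf : ‖f‖ = 1) :
    f ∈ SuppJ x ∨ -f ∈ SuppJ x ↔ |f x| = ‖x‖ := by
  simp only [SuppJ, mem_ofPred_eq, norm_neg, hf, true_and, neg_apply, abs_eq (norm_nonneg x),
    neg_eq_iff_eq_neg]

lemma exists_abs_apply_lt_norm_iff :
    (∃ f ∈ SuppJ y, |f x| < ‖x‖) ↔ ¬ ∀ f ∈ SuppJ y, f ∈ SuppJ x ∨ -f ∈ SuppJ x := by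
  push Not
  refine exists_congr fun f => and_congr_right fun hf => ?_
  have hle : |f x| ≤ ‖x‖ := by simpa [hf.1] using f.le_opNorm x
  rw [← not_or, mem_suppJ_or_neg_mem_suppJ_iff hf.1, hle.lt_iff_ne]

end SupportingFunctionals

section Orthogonality

variable {E : Type*} [NormedAddCommGroup E] [NormedSpace ℝ E] {x y : E} {ε : ℝ}

lemma isClosed_setOf_bjOrth (y : E) : IsClosed {x : E | BJOrth x y} := by
  simp only [BJOrth, ofPred_forall]
  exact isClosed_iInter fun t => isClosed_le (by fun_prop) (by fun_prop)

lemma BJOrth.norm_mkQ_span_singleton (h : BJOrth x y) : ‖(ℝ ∙ y).mkQ x‖ = ‖x‖ := by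
  refine le_antisymm (Submodule.Quotient.norm_mk_le _ x) (QuotientAddGroup.le_norm_iff.2 ?_)
  intro v hv
  obtain ⟨t, ht⟩ := Submodule.mem_span_singleton.1 ((Submodule.Quotient.eq (ℝ ∙ y)).1 hv)
  simpa [ht] using h t

/-- James' theorem: the functional is a norming functional of the class of `x` modulo `y`. -/
lemma BJOrth.exists_mem_suppJ_apply_eq_zero (hx : x ≠ 0) (h : BJOrth x y) :
    ∃ f ∈ SuppJ x, f y = 0 := by
  obtain ⟨g, hg, hgx⟩ := exists_dual_vector'' ℝ ((ℝ ∙ y).mkQ x)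
  refine ⟨g.comp (ℝ ∙ y).mkQL, mem_suppJ_of_norm_le_one hx ?_ ?_, ?_⟩
  · refine ContinuousLinearMap.opNorm_le_bound _ zero_le_one fun v => ?_
    exact (g.le_of_opNorm_le hg _).trans
      (mul_le_mul_of_nonneg_left (Submodule.Quotient.norm_mk_le _ v) zero_le_one)
  · exact hgx.trans h.norm_mkQ_span_singleton
  · have hy : (ℝ ∙ y).mkQ y = 0 := by simp
    simpa using congrArg g hy

lemma BOrth.norm_le_norm_add_smul_add (hx : x ≠ 0) (h : BOrth ε x y) (t : ℝ) :
    ‖x‖ ≤ ‖x + t • y‖ + ε * ‖t • y‖ := by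
  set d := ‖x‖ - ‖x + t • y‖ with hd
  have hconvex : ∀ s ∈ Ioo (0 : ℝ) 1, ‖x + (s * t) • y‖ ≤ ‖x‖ - s * d := fun s hs =>
    calc ‖x + (s * t) • y‖ = ‖(1 - s) • x + s • (x + t • y)‖ := by congr 1; module
      _ ≤ (1 - s) * ‖x‖ + s * ‖x + t • y‖ := by
        refine (norm_add_le _ _).trans_eq ?_
        rw [norm_smul_of_nonneg (sub_nonneg.2 hs.2.le), norm_smul_of_nonneg hs.1.le]
      _ = ‖x‖ - s * d := by rw [hd]; ring
  have hbound : ∀ s ∈ Ioo (0 : ℝ) 1, 2 * ‖x‖ * (d - ε * ‖t • y‖) ≤ s * d ^ 2 := fun s hs => by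
    have hsq : ‖x‖ ^ 2 - 2 * ε * ‖x‖ * (s * ‖t • y‖) ≤ (‖x‖ - s * d) ^ 2 := by
      have hst := h (s * t)
      rw [mul_smul s t y, norm_smul_of_nonneg hs.1.le, ← mul_smul] at hst
      exact hst.trans (pow_le_pow_left₀ (norm_nonneg _) (hconvex s hs) 2)
    refine le_of_mul_le_mul_left ?_ hs.1
    linear_combination hsq
  have hlim : Tendsto (fun s : ℝ => s * d ^ 2) (𝓝[>] 0) (𝓝 0) := by
    have : Continuous fun s : ℝ => s * d ^ 2 := by fun_prop
    simpa using (this.tendsto 0).mono_left nhdsWithin_le_nhds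
  have hnonpos : 2 * ‖x‖ * (d - ε * ‖t • y‖) ≤ 0 :=
    ge_of_tendsto hlim (Filter.mem_of_superset (Ioo_mem_nhdsGT one_pos) hbound)
  have hd_le : d - ε * ‖t • y‖ ≤ 0 := nonpos_of_mul_nonpos_right hnonpos (by positivity)
  linarith

lemma BOrth.bjOrth_toLp (hx : x ≠ 0) (hε : 0 ≤ ε) (h : BOrth ε x y) :
    BJOrth (toLp 1 (x, (0 : ℝ))) (toLp 1 (y, ε * ‖y‖)) := fun t => by
  have hsnd : ‖t • (ε * ‖y‖)‖ = ε * ‖t • y‖ := by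
    rw [norm_smul, norm_smul, norm_mul, norm_norm, Real.norm_of_nonneg hε, mul_left_comm]
  rw [norm_toLp_fst, prod_norm_eq_of_L1]
  simpa [← hsnd] using h.norm_le_norm_add_smul_add hx t

lemma BOrth.exists_mem_suppJ_abs_apply_le (hx : x ≠ 0) (hε : 0 ≤ ε) (h : BOrth ε x y) :
    ∃ f ∈ SuppJ x, |f y| ≤ ε * ‖y‖ := by
  obtain ⟨F, ⟨hF, hFx⟩, hFy⟩ := (h.bjOrth_toLp hx hε).exists_mem_suppJ_apply_eq_zero
    (by simpa using hx)
  have hF_le (w : WithLp 1 (E × ℝ)) : |F w| ≤ ‖w‖ := by simpa [hF] using F.le_opNorm w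
  let f : E →L[ℝ] ℝ := F.comp
    ((prodContinuousLinearEquiv 1 ℝ E ℝ).symm.toContinuousLinearMap.comp (.inl ℝ E ℝ))
  have hf (v : E) : f v = F (toLp 1 (v, 0)) := rfl
  refine ⟨f, mem_suppJ_of_norm_le_one hx ?_ ?_, ?_⟩
  · refine f.opNorm_le_bound zero_le_one fun v => ?_
    simpa [hf] using hF_le (toLp 1 (v, 0))
  · simpa [hf] using hFx
  · have hsplit : toLp 1 (y, (0 : ℝ)) = toLp 1 (y, ε * ‖y‖) - toLp 1 (0, ε * ‖y‖) := by
      simp [← toLp_sub]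
    rw [hf, hsplit, map_sub, hFy, zero_sub, abs_neg]
    simpa [abs_of_nonneg hε] using hF_le (toLp 1 (0, ε * ‖y‖))

lemma bOrth_of_mem_suppJ {f : E →L[ℝ] ℝ} (hf : f ∈ SuppJ x) (hfy : |f y| ≤ ε * ‖y‖) :
    BOrth ε x y := fun t => by
  have hle : |‖x‖ + t * f y| ≤ ‖x + t • y‖ := by
    simpa [hf.1, hf.2] using f.le_opNorm (x + t • y)
  have hty : -(t * f y) ≤ ε * ‖t • y‖ :=
    calc -(t * f y) ≤ |t| * |f y| := abs_mul t (f y) ▸ neg_le_abs _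
      _ ≤ |t| * (ε * ‖y‖) := by gcongr
      _ = ε * ‖t • y‖ := by rw [norm_smul, Real.norm_eq_abs]; ring
  calc ‖x‖ ^ 2 - 2 * ε * ‖x‖ * ‖t • y‖ ≤ ‖x‖ ^ 2 + 2 * ‖x‖ * (t * f y) := by
        linear_combination 2 * ‖x‖ * hty
    _ ≤ (‖x‖ + t * f y) ^ 2 := by linear_combination sq_nonneg (t * f y)
    _ ≤ ‖x + t • y‖ ^ 2 := sq_le_sq.2 (hle.trans (le_abs_self _))

theorem bOrth_iff_exists_mem_suppJ (hx : x ≠ 0) (hε : 0 ≤ ε) :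
    BOrth ε x y ↔ ∃ f ∈ SuppJ x, |f y| ≤ ε * ‖y‖ :=
  ⟨fun h => h.exists_mem_suppJ_abs_apply_le hx hε, fun ⟨_, hf, hfy⟩ => bOrth_of_mem_suppJ hf hfy⟩

end Orthogonality

lemma exists_uniform_abs_apply_le {E : Type*} [SeminormedAddCommGroup E] [NormedSpace ℝ E]
    {K : Set E} (hK : IsCompact K) {F : Set (E →L[ℝ] ℝ)}
    (h : ∀ z ∈ K, ∃ f ∈ F, |f z| < ‖z‖) :
    ∃ ε ∈ Ico (0 : ℝ) 1, ∀ z ∈ K, ∃ f ∈ F, |f z| ≤ ε * ‖z‖ := by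
  let U (ε : Ico (0 : ℝ) 1) : Set E := ⋃ f ∈ F, {z | |f z| < ε * ‖z‖}
  have hU_open (ε) : IsOpen (U ε) :=
    isOpen_biUnion fun f _ => isOpen_lt (by fun_prop) (by fun_prop)
  have hU_mono : Monotone U := fun ε δ hεδ => biUnion_mono subset_rfl fun f _ z hz =>
    hz.trans_le (mul_le_mul_of_nonneg_right (Subtype.coe_le_coe.2 hεδ) (norm_nonneg z))
  have hU_cover : K ⊆ ⋃ ε, U ε := fun z hz => by
    obtain ⟨f, hf, hfz⟩ := h z hz
    have hz_pos : 0 < ‖z‖ := (abs_nonneg _).trans_lt hfz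
    obtain ⟨ε, hlt, hε⟩ := exists_between ((div_lt_one hz_pos).2 hfz)
    have hε_nonneg : 0 ≤ ε := (by positivity : 0 ≤ |f z| / ‖z‖).trans hlt.le
    exact mem_iUnion.2 ⟨⟨ε, hε_nonneg, hε⟩, mem_biUnion hf ((div_lt_iff₀ hz_pos).1 hlt)⟩
  have : Nonempty (Ico (0 : ℝ) 1) := ⟨0, by simp⟩
  obtain ⟨ε, hε⟩ := hK.elim_directed_cover U hU_open hU_cover hU_mono.directed_le
  refine ⟨ε, ε.2, fun z hz => ?_⟩
  obtain ⟨f, hf, hfz⟩ := mem_iUnion₂.1 (hε hz)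
  exact ⟨f, hf, le_of_lt hfz⟩

theorem exists_forall_bOrth_iff {E : Type*} [NormedAddCommGroup E] [NormedSpace ℝ E]
    {K : Set E} {y : E} (hK : IsCompact K) (hK0 : 0 ∉ K) (hy : y ≠ 0) :
    (∃ ε ∈ Ico (0 : ℝ) 1, ∀ z ∈ K, BOrth ε y z) ↔ ∀ z ∈ K, ∃ f ∈ SuppJ y, |f z| < ‖z‖ := by
  constructor
  · rintro ⟨ε, ⟨hε0, hε1⟩, h⟩ z hz
    obtain ⟨f, hf, hfz⟩ := (bOrth_iff_exists_mem_suppJ hy hε0).1 (h z hz)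
    have hz_pos : 0 < ‖z‖ := norm_pos_iff.2 (ne_of_mem_of_not_mem hz hK0)
    exact ⟨f, hf, hfz.trans_lt (mul_lt_of_lt_one_left hz_pos hε1)⟩
  · intro h
    obtain ⟨ε, hε, hK_le⟩ := exists_uniform_abs_apply_le hK h
    exact ⟨ε, hε, fun z hz => (bOrth_iff_exists_mem_suppJ hy hε.1).2 (hK_le z hz)⟩

theorem stmt_12_general {X : Type*} [NormedAddCommGroup X] [NormedSpace ℝ X]
    (𝒜 : Set X) (h𝒜0 : 0 ∉ 𝒜) (h𝒜c : IsCompact 𝒜) :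
    (∀ y ∈ 𝒜, ∃ ε ∈ Set.Ico (0 : ℝ) 1, ∀ z ∈ 𝒜, BJOrth z y → BOrth ε y z) ↔
    (∀ x ∈ 𝒜, ¬ ∃ y ∈ 𝒜, BJOrth x y ∧ ∀ f ∈ SuppJ y, f ∈ SuppJ x ∨ -f ∈ SuppJ x) := by
  calc
    _ ↔ ∀ y ∈ 𝒜, ∀ z ∈ 𝒜, BJOrth z y → ∃ f ∈ SuppJ y, |f z| < ‖z‖ :=
      forall₂_congr fun y hy => by
        simpa only [mem_inter_iff, mem_ofPred_eq, and_imp] using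
          exists_forall_bOrth_iff (h𝒜c.inter_right (isClosed_setOf_bjOrth y))
            (fun h0 => h𝒜0 h0.1) (ne_of_mem_of_not_mem hy h𝒜0)
    _ ↔ ∀ x ∈ 𝒜, ∀ y ∈ 𝒜, BJOrth x y → ∃ f ∈ SuppJ y, |f x| < ‖x‖ :=
      ⟨fun h x hx y hy => h y hy x hx, fun h y hy x hx => h x hx y hy⟩
    _ ↔ _ := by simp only [exists_abs_apply_lt_norm_iff, not_exists, not_and]

theorem stmt_12 {X : Type*} [NormedAddCommGroup X] [NormedSpace ℝ X]
    (𝒜 : Set X) (h𝒜S : 𝒜 ⊆ Metric.sphere (0 : X) 1) (h𝒜c : IsCompact 𝒜) :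
    (∀ y ∈ 𝒜, ∃ ε ∈ Set.Ico (0 : ℝ) 1, ∀ z ∈ 𝒜, BJOrth z y → BOrth ε y z) ↔
    (∀ x ∈ 𝒜, ¬ ∃ y ∈ 𝒜, BJOrth x y ∧ ∀ f ∈ SuppJ y, f ∈ SuppJ x ∨ -f ∈ SuppJ x) :=
  stmt_12_general 𝒜 (fun h0 => by simpa using h𝒜S h0) h𝒜c
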